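/- Let z* ∈ X, u* ∈ ℝ^s with u* ≥ 0 and v* ∈ ℝ^r with v* ≥ 0, and suppose uᵢ* gᵢ(z*) = 0 for every i = 1,…,s. Then the stationarity equation ∇g(z*) + Σᵢ uᵢ* ∇gᵢ(z*) + Σⱼ vⱼ* ∇hⱼ(z*) = 0 holds if and only if for every penalty parameter ρ > 0, z* is a global minimizer over E of the augmented Lagrangian penalty function A(z; u*, v*, ρ) = L(z; u*, v*) + ρ Σᵢ (max{gᵢ(z), 0})² + ρ Σⱼ hⱼ(z)². -/

import Mathlib

/-!
Feasibility of `z*` makes every penalty term vanish there, and the penalty is nonnegative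
elsewhere. So `z*` minimizes the Lagrangian if and only if it minimizes `A(·; u, v, ρ)` for every
`ρ > 0`: one direction adds a nonnegative term, the other lets `ρ` tend to `0`. Since the
multipliers are nonnegative the Lagrangian is convex, and a convex function attains its minimum
exactly where its derivative vanishes.
-/

open Filter Topology

section Convex

theorem convexOn_sum {𝕜 E β ι : Type*} [Semiring 𝕜] [PartialOrder 𝕜] [AddCommMonoid E] [SMul 𝕜 E]
    [AddCommMonoid β] [PartialOrder β] [IsOrderedAddMonoid β] [Module 𝕜 β] {C : Set E}
    {t : Finset ι} {f : ι → E → β} (hC : Convex 𝕜 C) (hf : ∀ i ∈ t, ConvexOn 𝕜 C (f i)) :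
    ConvexOn 𝕜 C fun z => ∑ i ∈ t, f i z := by
  simpa only [Finset.sum_fn] using
    Finset.sum_induction f (ConvexOn 𝕜 C) (fun _ _ => ConvexOn.add) (convexOn_const 0 hC) hf

variable {E : Type*} [NormedAddCommGroup E] [NormedSpace ℝ E] {C : Set E} {f : E → ℝ}
  {f' : E →L[ℝ] ℝ} {x y : E}

theorem add_fderiv_sub_le_of_convexOn (hf : ConvexOn ℝ C f) (hf' : HasFDerivWithinAt f f' C x)
    (hx : x ∈ C) (hy : y ∈ C) : f x + f' (y - x) ≤ f y := by
  let line : ℝ →ᵃ[ℝ] E := AffineMap.lineMap x y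
  have hderiv : HasDerivWithinAt (f ∘ line) (f' (y - x)) (line ⁻¹' C) 0 :=
    hf'.comp_hasDerivWithinAt_of_eq 0 AffineMap.hasDerivWithinAt_lineMap
      (Set.mapsTo_preimage line C) (AffineMap.lineMap_apply_zero x y).symm
  have hslope : f' (y - x) ≤ slope (f ∘ line) 0 1 :=
    (hf.comp_affineMap line).le_slope_of_hasDerivWithinAt
      (by simpa [line] using hx) (by simpa [line] using hy) one_pos hderiv
  have hsecant : slope (f ∘ line) 0 1 = f y - f x := by simp [slope_def_field, line]
  linarith

theorem isMinOn_iff_fderiv_eq_zero_of_convexOn (hf : ConvexOn ℝ C f) (hf' : HasFDerivAt f f' x)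
    (hC : C ∈ 𝓝 x) : IsMinOn f C x ↔ f' = 0 := by
  refine ⟨fun hmin => (hmin.isLocalMin hC).hasFDerivAt_eq_zero hf', ?_⟩
  rintro rfl y hy
  simpa using add_fderiv_sub_le_of_convexOn hf hf'.hasFDerivWithinAt (mem_of_mem_nhds hC) hy

end Convex

theorem forall_pos_isMinOn_add_mul_iff {α : Type*} {f p : α → ℝ} {C : Set α} {x : α}
    (hp : ∀ z ∈ C, 0 ≤ p z) (hx : p x = 0) :
    (∀ ρ > 0, IsMinOn (fun z => f z + ρ * p z) C x) ↔ IsMinOn f C x := by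
  simp only [isMinOn_iff, hx, mul_zero, add_zero]
  refine ⟨fun hmin z hz => ?_, fun hmin ρ hρ z hz =>
    le_add_of_le_of_nonneg (hmin z hz) (mul_nonneg hρ.le (hp z hz))⟩
  have hlim : Tendsto (fun ρ : ℝ => f z + ρ * p z) (𝓝[>] 0) (𝓝 (f z)) :=
    tendsto_nhdsWithin_of_tendsto_nhds <| Continuous.tendsto' (by fun_prop) 0 (f z) (by simp)
  exact ge_of_tendsto hlim (eventually_mem_nhdsWithin.mono fun ρ hρ => hmin ρ hρ z hz)

section Lagrangian

variable {α ι κ : Type*} [Fintype ι] [Fintype κ]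

/-- The Lagrange function `L(z; u, v)` of the problem of minimizing `g` subject to `G i ≤ 0` and
`H j = 0`. -/
def lagrangian (g : α → ℝ) (G : ι → α → ℝ) (H : κ → α → ℝ) (u : ι → ℝ) (v : κ → ℝ) (z : α) : ℝ :=
  g z + ∑ i, u i * G i z + ∑ j, v j * H j z

/-- The quadratic penalty for violating the constraints `G i ≤ 0` and `H j = 0`, without the
factor `ρ`. -/
def squaredViolation (G : ι → α → ℝ) (H : κ → α → ℝ) (z : α) : ℝ :=
  ∑ i, max (G i z) 0 ^ 2 + ∑ j, H j z ^ 2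

/-- The augmented Lagrangian penalty function `A(z; u, v, ρ)`. -/
def augmentedLagrangian (g : α → ℝ) (G : ι → α → ℝ) (H : κ → α → ℝ) (u : ι → ℝ) (v : κ → ℝ)
    (ρ : ℝ) (z : α) : ℝ :=
  lagrangian g G H u v z + ρ * squaredViolation G H z

theorem squaredViolation_nonneg (G : ι → α → ℝ) (H : κ → α → ℝ) (z : α) :
    0 ≤ squaredViolation G H z := by
  unfold squaredViolation
  positivity

theorem squaredViolation_eq_zero_of_feasible {G : ι → α → ℝ} {H : κ → α → ℝ} {z : α}
    (hG : ∀ i, G i z ≤ 0) (hH : ∀ j, H j z = 0) : squaredViolation G H z = 0 := by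
  simp [squaredViolation, hG, hH]

theorem convexOn_lagrangian {E : Type*} [AddCommMonoid E] [SMul ℝ E] {C : Set E} {g : E → ℝ}
    {G : ι → E → ℝ} {H : κ → E → ℝ} {u : ι → ℝ} {v : κ → ℝ} (hg : ConvexOn ℝ C g)
    (hG : ∀ i, ConvexOn ℝ C (G i)) (hH : ∀ j, ConvexOn ℝ C (H j)) (hu : ∀ i, 0 ≤ u i)
    (hv : ∀ j, 0 ≤ v j) : ConvexOn ℝ C (lagrangian g G H u v) :=
  (hg.add (convexOn_sum hg.1 fun i _ => (hG i).smul (hu i))).add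
    (convexOn_sum hg.1 fun j _ => (hH j).smul (hv j))

variable {E : Type*} [NormedAddCommGroup E] [NormedSpace ℝ E] {g : E → ℝ} {G : ι → E → ℝ}
  {H : κ → E → ℝ} {u : ι → ℝ} {v : κ → ℝ} {zs : E}

theorem hasFDerivAt_lagrangian {g' : E →L[ℝ] ℝ} {G' : ι → E →L[ℝ] ℝ} {H' : κ → E →L[ℝ] ℝ}
    (hg : HasFDerivAt g g' zs) (hG : ∀ i, HasFDerivAt (G i) (G' i) zs)
    (hH : ∀ j, HasFDerivAt (H j) (H' j) zs) :
    HasFDerivAt (lagrangian g G H u v) (g' + ∑ i, u i • G' i + ∑ j, v j • H' j) zs :=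
  (hg.add (.fun_sum fun i _ => (hG i).const_mul (u i))).add
    (.fun_sum fun j _ => (hH j).const_mul (v j))

theorem stmt_17_general {C : Set E} (hC : C ∈ 𝓝 zs)
    (hg : ConvexOn ℝ C g) (hgd : DifferentiableAt ℝ g zs)
    (hG : ∀ i, ConvexOn ℝ C (G i)) (hGd : ∀ i, DifferentiableAt ℝ (G i) zs)
    (hH : ∀ j, ConvexOn ℝ C (H j)) (hHd : ∀ j, DifferentiableAt ℝ (H j) zs)
    (hGzs : ∀ i, G i zs ≤ 0) (hHzs : ∀ j, H j zs = 0)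
    (hu : ∀ i, 0 ≤ u i) (hv : ∀ j, 0 ≤ v j) :
    fderiv ℝ g zs + ∑ i, u i • fderiv ℝ (G i) zs + ∑ j, v j • fderiv ℝ (H j) zs = 0 ↔
      ∀ ρ > 0, IsMinOn (augmentedLagrangian g G H u v ρ) C zs := by
  have hL' := hasFDerivAt_lagrangian (u := u) (v := v) hgd.hasFDerivAt
    (fun i => (hGd i).hasFDerivAt) (fun j => (hHd j).hasFDerivAt)
  have hLconv := convexOn_lagrangian hg hG hH hu hv
  rw [← isMinOn_iff_fderiv_eq_zero_of_convexOn hLconv hL' hC]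
  exact (forall_pos_isMinOn_add_mul_iff (fun z _ => squaredViolation_nonneg G H z)
    (squaredViolation_eq_zero_of_feasible hGzs hHzs)).symm

end Lagrangian

/-- Theorem 8(ii): at a feasible `zs` with multipliers `u ≥ 0`, `v ≥ 0`
satisfying complementary slackness, the stationarity equation holds if and only
if for every penalty parameter `ρ > 0`, `zs` globally minimizes the augmented
Lagrangian penalty function
`A(z; u, v, ρ) = L(z; u, v) + ρ Σᵢ (max{gᵢ(z),0})² + ρ Σⱼ hⱼ(z)²`. -/
theorem stmt_17 {n s r : ℕ}
    (g : EuclideanSpace ℝ (Fin n) → ℝ)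
    (G : Fin s → EuclideanSpace ℝ (Fin n) → ℝ)
    (H : Fin r → EuclideanSpace ℝ (Fin n) → ℝ)
    (hg : ConvexOn ℝ Set.univ g) (hgd : Differentiable ℝ g)
    (hG : ∀ i, ConvexOn ℝ Set.univ (G i)) (hGd : ∀ i, Differentiable ℝ (G i))
    (hH : ∀ j, ConvexOn ℝ Set.univ (H j)) (hHd : ∀ j, Differentiable ℝ (H j))
    (X : Set (EuclideanSpace ℝ (Fin n)))
    (hX : X = {z | (∀ i, G i z ≤ 0) ∧ (∀ j, H j z = 0)})
    (zs : EuclideanSpace ℝ (Fin n)) (hzs : zs ∈ X)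
    (u : Fin s → ℝ) (v : Fin r → ℝ) (hu : ∀ i, 0 ≤ u i) (hv : ∀ j, 0 ≤ v j)
    (hcomp : ∀ i, u i * G i zs = 0)
    (L : EuclideanSpace ℝ (Fin n) → ℝ)
    (hL : ∀ z, L z = g z + ∑ i, u i * G i z + ∑ j, v j * H j z)
    (A : EuclideanSpace ℝ (Fin n) → ℝ → ℝ)
    (hA : ∀ z ρ, A z ρ = L z + ρ * ∑ i, (max (G i z) 0) ^ 2
        + ρ * ∑ j, (H j z) ^ 2) :
    (fderiv ℝ g zs + ∑ i, u i • fderiv ℝ (G i) zs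
      + ∑ j, v j • fderiv ℝ (H j) zs = 0) ↔
    (∀ ρ > 0, ∀ z, A zs ρ ≤ A z ρ) := by
  subst hX
  simpa only [isMinOn_univ_iff, augmentedLagrangian, lagrangian, squaredViolation, hA, hL, mul_add,
    add_assoc] using stmt_17_general Filter.univ_mem hg (hgd zs) hG (fun i => hGd i zs) hH
      (fun j => hHd j zs) hzs.1 hzs.2 hu hv
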